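/- Let l, r > 0 and let p be a polynomial, p(x) = Σ_{n=0}^k p_n xⁿ = Σ_{n=0}^k q_n (x−1)ⁿ (so p_n = p⁽ⁿ⁾(0)/n! and q_n = p⁽ⁿ⁾(1)/n!), with 0 ≤ p(x) ≤ 1 for x ∈ [0,1], p_0 < 1 and q_0 > 0. Suppose F_L = Beta(1,l) and F_R = Beta(1,r). Then the Markov chain X with kernel κ is ergodic with stationary density π(x) = C x^{l(1−p_0)−1} (1−x)^{r q_0 −1} ( l + (r−l)x ) · exp( r Σ_{n=1}^k (q_n/n)(x−1)ⁿ − l Σ_{n=1}^k (p_n/n) xⁿ ), 0 < x < 1, where C > 0 is a normalising constant. -/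

import Mathlib

/-!
Stationarity is an explicit computation. Write the density as `π = g (l / x + r / (1 - x))` with
`g = C x^{l(1-p₀)} (1-x)^{r q₀} exp(⋯)`. Dividing `p - p₀` by `x` and `p - q₀` by `x - 1` in the two
expansions of `p` gives `g' = g (l (1 - p) / x - r p / (1 - x))`, which says that `x^{-l} g` and
`(1 - x)^{-r} g` have derivatives `-p x^{-l} π` and `(1 - p) (1 - x)^{-r} π`. Since `g` vanishes at
both endpoints (`p₀ < 1`, `q₀ > 0`), these integrate to the total inflow into `y` from its right
and from its left (`lintegral_inflow_right`, `lintegral_inflow_left`); as the jump densities are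
`l y^{l-1} x^{-l}` on `y < x` and `r (1-y)^{r-1} (1-x)^{-r}` on `y > x`, the inflows add up to
`π y` after Tonelli (`bind_mcKernel_polyDens`).

Uniqueness and convergence come from Doeblin's condition for the two-step kernel. From every point
of `[0,1]` at least one of the following has probability bounded below: jumping right into a
neighbourhood of `1`, where a jump left is likely, or jumping left into a neighbourhood of `0`,
where a jump right is likely. Hence all two-step laws dominate one multiple of Lebesgue measure on
a middle interval (`exists_minorization`), and oscillations of functions contract geometrically
under the transition operator (`osc_transOp_iterate`, `doeblin`).
-/

open MeasureTheory Filter Topology Set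

/-- The one-step Markov kernel of the chain. -/
noncomputable def mcKernel (FL FR : Measure ℝ) (p : ℝ → ℝ) (x : ℝ) : Measure ℝ :=
  Measure.map (fun w : ℝ × ℝ × ℝ => if w.2.2 < p x then x - x * w.1 else x + (1 - x) * w.2.1)
    (FL.prod (FR.prod (volume.restrict (Icc (0 : ℝ) 1))))

/-- The `n`-step law of the chain with one-step kernel `κ` started at `x`. -/
noncomputable def iterLaw (κ : ℝ → Measure ℝ) (x : ℝ) : ℕ → Measure ℝ
  | 0 => Measure.dirac x
  | n + 1 => (iterLaw κ x n).bind κ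

/-- The total variation distance between two measures. -/
noncomputable def tvDist (μ ν : Measure ℝ) : ℝ :=
  ⨆ B : {B : Set ℝ // MeasurableSet B}, |(μ B.1).toReal - (ν B.1).toReal|

/-- The beta distribution `Beta(a,b)` on `(0,1)`. -/
noncomputable def betaMeasure (a b : ℝ) : Measure ℝ :=
  volume.withDensity fun x =>
    indicator (Ioo (0 : ℝ) 1)
      (fun z => ENNReal.ofReal
        (z ^ (a - 1) * (1 - z) ^ (b - 1) / ∫ u in (0 : ℝ)..1, u ^ (a - 1) * (1 - u) ^ (b - 1))) x

/-- The stationary density for polynomial `p(x) = Σ_{n=0}^k pc_n xⁿ = Σ_{n=0}^k qc_n (x-1)ⁿ`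
(up to the normalising constant `C`). -/
noncomputable def polyDens (l r C : ℝ) (k : ℕ) (pc qc : ℕ → ℝ) (x : ℝ) : ℝ :=
  C * x ^ (l * (1 - pc 0) - 1) * (1 - x) ^ (r * qc 0 - 1) * (l + (r - l) * x) *
    Real.exp (r * ∑ n ∈ Finset.Icc 1 k, qc n / (n : ℝ) * (x - 1) ^ n -
      l * ∑ n ∈ Finset.Icc 1 k, pc n / (n : ℝ) * x ^ n)

open scoped ENNReal

/-! ### Doeblin's theorem -/

/-- The transition operator of a kernel on nonnegative functions, `(Q f)(x) = ∫ f dκ(x)`. -/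
noncomputable def transOp (κ : ℝ → Measure ℝ) (f : ℝ → ℝ≥0∞) (x : ℝ) : ℝ≥0∞ :=
  ∫⁻ y, f y ∂κ x

lemma measurable_transOp {κ : ℝ → Measure ℝ} (hκ : Measurable κ) {f : ℝ → ℝ≥0∞}
    (hf : Measurable f) : Measurable (transOp κ f) :=
  (Measure.measurable_lintegral hf).comp hκ

lemma measurable_transOp_iterate {κ : ℝ → Measure ℝ} (hκ : Measurable κ) {f : ℝ → ℝ≥0∞}
    (hf : Measurable f) (n : ℕ) : Measurable ((transOp κ)^[n] f) := by
  induction n with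
  | zero => exact hf
  | succ n ih =>
    rw [Function.iterate_succ_apply']
    exact measurable_transOp hκ ih

lemma lintegral_bind_transOp {κ : ℝ → Measure ℝ} (hκ : Measurable κ) {f : ℝ → ℝ≥0∞}
    (hf : Measurable f) (μ : Measure ℝ) : ∫⁻ x, f x ∂(μ.bind κ) = ∫⁻ x, transOp κ f x ∂μ :=
  Measure.lintegral_bind hκ.aemeasurable hf.aemeasurable

lemma lintegral_iterLaw {κ : ℝ → Measure ℝ} (hκ : Measurable κ) (x : ℝ) (n : ℕ) :
    ∀ {f : ℝ → ℝ≥0∞}, Measurable f → ∫⁻ y, f y ∂(iterLaw κ x n) = (transOp κ)^[n] f x := by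
  induction n with
  | zero => intro f hf; simp [iterLaw, lintegral_dirac' _ hf]
  | succ n ih =>
    intro f hf
    rw [iterLaw, lintegral_bind_transOp hκ hf, ih (measurable_transOp hκ hf),
      Function.iterate_succ_apply]

lemma lintegral_invariant {κ : ℝ → Measure ℝ} (hκ : Measurable κ) {μ : Measure ℝ}
    (hμ : μ.bind κ = μ) (n : ℕ) :
    ∀ {f : ℝ → ℝ≥0∞}, Measurable f → ∫⁻ y, f y ∂μ = ∫⁻ y, (transOp κ)^[n] f y ∂μ := by
  induction n with
  | zero => intro f _; rfl
  | succ n ih =>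
    intro f hf
    rw [Function.iterate_succ, Function.comp_apply, ← ih (measurable_transOp hκ hf),
      ← lintegral_bind_transOp hκ hf, hμ]

/-- A probability measure carried by `S` and dominating `lam` averages a function with values in
`[m, m + d]` on `S` into an interval of length `(1 - lam univ) * d` which depends on `lam` but not
on the measure. -/
lemma lintegral_mem_of_minorized {S : Set ℝ} {ρ lam : Measure ℝ}
    [IsProbabilityMeasure ρ] [IsFiniteMeasure lam] (hS : ∀ᵐ y ∂ρ, y ∈ S) (hle : lam ≤ ρ)
    {f : ℝ → ℝ≥0∞} {m d : ℝ≥0∞} (hf : ∀ y ∈ S, m ≤ f y ∧ f y ≤ m + d) :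
    (∫⁻ y, f y ∂lam) + m * (1 - lam univ) ≤ ∫⁻ y, f y ∂ρ ∧
      ∫⁻ y, f y ∂ρ ≤ (∫⁻ y, f y ∂lam) + m * (1 - lam univ) + (1 - lam univ) * d := by
  set η := ρ - lam with hη
  have hadd : η + lam = ρ := Measure.sub_add_cancel_of_le hle
  have hmass : η univ = 1 - lam univ := by
    have h1 : η univ + lam univ = 1 := by
      rw [← Measure.add_apply, hadd]; exact measure_univ
    exact ENNReal.eq_sub_of_add_eq (measure_ne_top _ _) h1
  have hηS : ∀ᵐ y ∂η, y ∈ S := (Measure.absolutelyContinuous_of_le Measure.sub_le).ae_le hS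
  have hsplit : ∫⁻ y, f y ∂ρ = ∫⁻ y, f y ∂η + ∫⁻ y, f y ∂lam := by
    rw [← lintegral_add_measure, hadd]
  have hlo : m * (1 - lam univ) ≤ ∫⁻ y, f y ∂η := by
    rw [← hmass, ← lintegral_const]
    exact lintegral_mono_ae (hηS.mono fun y hy => (hf y hy).1)
  have hhi : ∫⁻ y, f y ∂η ≤ (m + d) * (1 - lam univ) := by
    rw [← hmass, ← lintegral_const]
    exact lintegral_mono_ae (hηS.mono fun y hy => (hf y hy).2)
  rw [hsplit]
  constructor
  · rw [add_comm]; gcongr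
  · calc _ ≤ (m + d) * (1 - lam univ) + ∫⁻ y, f y ∂lam := by gcongr
      _ = _ := by ring

section Doeblin

variable {κ : ℝ → Measure ℝ} {S : Set ℝ} {lam : Measure ℝ}

/-- Geometric contraction of oscillations: two steps shrink the oscillation on `S` by the factor
`1 - lam univ`, and a single step never increases it. -/
lemma osc_transOp_iterate (hκ : Measurable κ) (hprob : ∀ x, IsProbabilityMeasure (κ x))
    (hSm : MeasurableSet S) (hS : ∀ x ∈ S, ∀ᵐ y ∂κ x, y ∈ S) [IsFiniteMeasure lam]
    (hmin : ∀ x ∈ S, lam ≤ (κ x).bind κ) {f : ℝ → ℝ≥0∞} (hf : Measurable f) (hf1 : ∀ x, f x ≤ 1)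
    (n : ℕ) :
    ∃ m, ∀ x ∈ S, m ≤ (transOp κ)^[n] f x ∧
      (transOp κ)^[n] f x ≤ m + (1 - lam univ) ^ (n / 2) := by
  induction n using Nat.twoStepInduction with
  | zero => exact ⟨0, fun x _ => by simpa using hf1 x⟩
  | one =>
    refine ⟨0, fun x _ => ⟨zero_le, ?_⟩⟩
    have := hprob x
    calc transOp κ f x ≤ ∫⁻ _, 1 ∂κ x := lintegral_mono hf1
      _ = _ := by simp
  | more n ih _ =>
    obtain ⟨m, hm⟩ := ih
    refine ⟨(∫⁻ y, (transOp κ)^[n] f y ∂lam) + m * (1 - lam univ), fun x hx => ?_⟩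
    have hP : IsProbabilityMeasure ((κ x).bind κ) := by
      have := hprob x
      constructor
      rw [Measure.bind_apply .univ hκ.aemeasurable]
      simp [fun y => (hprob y).measure_univ]
    have hSx : ∀ᵐ y ∂(κ x).bind κ, y ∈ S := by
      rw [ae_iff, show {y | y ∉ S} = Sᶜ from rfl,
        Measure.bind_apply hSm.compl hκ.aemeasurable]
      refine lintegral_eq_zero_of_ae_eq_zero ?_
      exact (hS x hx).mono fun y hy => ae_iff.1 (hS y hy)
    have h := lintegral_mem_of_minorized hSx (hmin x hx) hm
    rw [lintegral_bind_transOp hκ (measurable_transOp_iterate hκ hf n)] at h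
    have e : (transOp κ)^[n + 2] f x = ∫⁻ y, transOp κ ((transOp κ)^[n] f) y ∂κ x := by
      rw [Function.iterate_succ_apply', Function.iterate_succ_apply']; rfl
    have e2 : (n + 2) / 2 = n / 2 + 1 := by omega
    rw [e, e2, pow_succ']
    exact h

lemma abs_toReal_sub_le {a b m d : ℝ≥0∞} (ha : a ≤ 1) (hd : d ≤ 1) (h1 : m ≤ a)
    (h2 : a ≤ m + d) (h3 : m ≤ b) (h4 : b ≤ m + d) : |a.toReal - b.toReal| ≤ d.toReal := by
  have hm : m ≠ ⊤ := ne_top_of_le_ne_top ENNReal.one_ne_top (h1.trans ha)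
  have hd' : d ≠ ⊤ := ne_top_of_le_ne_top ENNReal.one_ne_top hd
  have hmd : m + d ≠ ⊤ := ENNReal.add_ne_top.2 ⟨hm, hd'⟩
  have i1 := ENNReal.toReal_mono (ne_top_of_le_ne_top hmd h2) h1
  have i2 := ENNReal.toReal_mono hmd h2
  have i3 := ENNReal.toReal_mono (ne_top_of_le_ne_top hmd h4) h3
  have i4 := ENNReal.toReal_mono hmd h4
  rw [ENNReal.toReal_add hm hd'] at i2 i4
  rw [abs_le]; constructor <;> linarith

lemma abs_sub_le_of_osc {ν₁ ν₂ : Measure ℝ} [IsProbabilityMeasure ν₁] [IsProbabilityMeasure ν₂]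
    (h₁ : ∀ᵐ y ∂ν₁, y ∈ S) (h₂ : ∀ᵐ y ∂ν₂, y ∈ S) {f : ℝ → ℝ≥0∞} {m d : ℝ≥0∞} (hd : d ≤ 1)
    (hν : ∫⁻ y, f y ∂ν₁ ≤ 1) (hf : ∀ y ∈ S, m ≤ f y ∧ f y ≤ m + d) :
    |(∫⁻ y, f y ∂ν₁).toReal - (∫⁻ y, f y ∂ν₂).toReal| ≤ d.toReal := by
  have h1 := lintegral_mem_of_minorized (lam := 0) h₁ (Measure.zero_le _) hf
  have h2 := lintegral_mem_of_minorized (lam := 0) h₂ (Measure.zero_le _) hf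
  simp only [lintegral_zero_measure, Measure.coe_zero, Pi.zero_apply, tsub_zero, mul_one, zero_add,
    one_mul] at h1 h2
  exact abs_toReal_sub_le hν hd h1.1 h1.2 h2.1 h2.2

/-- Doeblin's theorem: if all two-step laws from `S` dominate a common nonzero measure, an
invariant probability measure on `S` attracts every other invariant one and every `n`-step law,
uniformly over events. -/
theorem doeblin (hκ : Measurable κ) (hprob : ∀ x, IsProbabilityMeasure (κ x))
    (hSm : MeasurableSet S)
    (hS : ∀ x ∈ S, ∀ᵐ y ∂κ x, y ∈ S) [IsFiniteMeasure lam] (hlam : lam ≠ 0)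
    (hmin : ∀ x ∈ S, lam ≤ (κ x).bind κ) {μ : Measure ℝ} [IsProbabilityMeasure μ]
    (hμS : ∀ᵐ y ∂μ, y ∈ S) (hμ : μ.bind κ = μ) :
    (∀ ν : Measure ℝ, IsProbabilityMeasure ν → (∀ᵐ y ∂ν, y ∈ S) → ν.bind κ = ν → ν = μ) ∧
      ∀ x ∈ S, Tendsto (fun n => tvDist (iterLaw κ x n) μ) atTop (𝓝 0) := by
  set c := 1 - lam univ with hc
  have hc1 : c ≤ 1 := tsub_le_self
  have hclt : c < 1 := ENNReal.sub_lt_self ENNReal.one_ne_top one_ne_zero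
    (by simpa using hlam)
  have hcn : ∀ n, c ^ n ≤ 1 := fun n => pow_le_one₀ zero_le hc1
  have hlim : Tendsto (fun n : ℕ => (c ^ (n / 2)).toReal) atTop (𝓝 0) := by
    have h1 : Tendsto (fun n : ℕ => c ^ (n / 2)) atTop (𝓝 0) :=
      (ENNReal.tendsto_pow_atTop_nhds_zero_of_lt_one hclt).comp
        (Nat.tendsto_div_const_atTop two_ne_zero)
    exact (ENNReal.tendsto_toReal ENNReal.zero_ne_top).comp h1
  have key : ∀ {B : Set ℝ}, MeasurableSet B → ∀ n, ∃ m, ∀ x ∈ S,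
      m ≤ (transOp κ)^[n] (B.indicator 1) x ∧
      (transOp κ)^[n] (B.indicator 1) x ≤ m + c ^ (n / 2) := fun hB n =>
    osc_transOp_iterate hκ hprob hSm hS hmin (measurable_one.indicator hB)
      (fun x => indicator_le_self' (by simp) x) n
  constructor
  · intro ν hν hνS hinv
    ext B hB
    rw [← ENNReal.toReal_eq_toReal_iff' (measure_ne_top _ _) (measure_ne_top _ _), ← sub_eq_zero,
      ← abs_eq_zero]
    refine le_antisymm (ge_of_tendsto' hlim fun n => ?_) (abs_nonneg _)
    obtain ⟨m, hm⟩ := key hB n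
    have e1 := lintegral_invariant hκ hinv n (measurable_one.indicator hB : Measurable
      (B.indicator (1 : ℝ → ℝ≥0∞)))
    have e2 := lintegral_invariant hκ hμ n (measurable_one.indicator hB : Measurable
      (B.indicator (1 : ℝ → ℝ≥0∞)))
    rw [lintegral_indicator_one hB] at e1 e2
    have := abs_sub_le_of_osc hνS hμS (hcn _) (by rw [← e1]; exact prob_le_one) hm
    rwa [← e1, ← e2] at this
  · intro x hx
    refine squeeze_zero (fun n => Real.iSup_nonneg fun _ => abs_nonneg _) (fun n => ?_) hlim
    refine ciSup_le fun B => ?_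
    obtain ⟨m, hm⟩ := key B.2 n
    have e1 := lintegral_iterLaw hκ x n (measurable_one.indicator B.2 : Measurable
      (B.1.indicator (1 : ℝ → ℝ≥0∞)))
    have e2 := lintegral_invariant hκ hμ n (measurable_one.indicator B.2 : Measurable
      (B.1.indicator (1 : ℝ → ℝ≥0∞)))
    have hmeas := measurable_transOp_iterate hκ (measurable_one.indicator B.2 : Measurable
      (B.1.indicator (1 : ℝ → ℝ≥0∞))) n
    rw [lintegral_indicator_one B.2] at e1 e2
    rw [← lintegral_dirac' x hmeas] at e1
    rw [abs_sub_comm]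
    have := abs_sub_le_of_osc (ν₂ := Measure.dirac x) hμS
      ((ae_dirac_iff hSm).2 hx) (hcn _) (by rw [← e2]; exact prob_le_one) hm
    rwa [← e1, ← e2] at this

end Doeblin

/-! ### The kernel as a mixture of left and right jumps -/

/-- The fundamental theorem of calculus for a nonnegative derivative, with the integrand allowed to
blow up at the endpoints. -/
lemma lintegral_Ioo_deriv {a b : ℝ} (hab : a ≤ b) {H h : ℝ → ℝ} (hc : ContinuousOn H (Icc a b))
    (hd : ∀ x ∈ Ioo a b, HasDerivAt H (h x) x) (hnn : ∀ x ∈ Ioo a b, 0 ≤ h x) :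
    ∫⁻ x in Ioo a b, ENNReal.ofReal (h x) = ENNReal.ofReal (H b - H a) := by
  have hint := intervalIntegral.integrableOn_deriv_of_nonneg hc hd hnn
  rw [← intervalIntegral.integral_eq_sub_of_hasDerivAt_of_le hab hc hd
    ((intervalIntegrable_iff_integrableOn_Ioc_of_le hab).2 hint),
    intervalIntegral.integral_of_le hab, integral_Ioc_eq_integral_Ioo,
    ofReal_integral_eq_lintegral_ofReal (hint.mono_set Ioo_subset_Ioc_self)]
  exact (ae_restrict_iff' measurableSet_Ioo).2 (ae_of_all _ hnn)

lemma lintegral_left_weight {l a b : ℝ} (hl : 0 < l) (ha : 0 ≤ a) (hab : a ≤ b) :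
    ∫⁻ y in Ioo a b, ENNReal.ofReal (l * y ^ (l - 1)) = ENNReal.ofReal (b ^ l - a ^ l) := by
  refine lintegral_Ioo_deriv (H := fun y => y ^ l) hab
    (Real.continuous_rpow_const hl.le).continuousOn (fun x hx => ?_) (fun x hx => ?_)
  · exact Real.hasDerivAt_rpow_const (Or.inl (ha.trans_lt hx.1).ne')
  · have := ha.trans_lt hx.1
    positivity

lemma lintegral_right_weight {r a b : ℝ} (hr : 0 < r) (hb : b ≤ 1) (hab : a ≤ b) :
    ∫⁻ y in Ioo a b, ENNReal.ofReal (r * (1 - y) ^ (r - 1)) =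
      ENNReal.ofReal ((1 - a) ^ r - (1 - b) ^ r) := by
  rw [lintegral_Ioo_deriv (H := fun y => - (1 - y) ^ r) hab ?_ (fun x hx => ?_) (fun x hx => ?_)]
  · congr 1; ring
  · exact ((Real.continuous_rpow_const hr.le).comp (by fun_prop)).neg.continuousOn
  · have h : 0 < 1 - x := by linarith [hx.2]
    have := (((hasDerivAt_id x).const_sub 1).rpow_const (p := r) (Or.inl h.ne')).neg
    exact HasDerivAt.congr_deriv this (by simp)
  · have h : 0 < 1 - x := by linarith [hx.2]
    positivity

lemma betaMeasure_one_eq {l : ℝ} (hl : 0 < l) :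
    betaMeasure 1 l = (volume.restrict (Ioo (0 : ℝ) 1)).withDensity
      fun z => ENNReal.ofReal (l * (1 - z) ^ (l - 1)) := by
  have hI : ∫ u in (0 : ℝ)..1, u ^ ((1 : ℝ) - 1) * (1 - u) ^ (l - 1) = l⁻¹ := by
    simp only [sub_self, Real.rpow_zero, one_mul]
    rw [intervalIntegral.integral_comp_sub_left (fun u : ℝ => u ^ (l - 1)) 1,
      integral_rpow (Or.inl (by linarith))]
    simp [Real.zero_rpow hl.ne']
  rw [betaMeasure, hI, ← withDensity_indicator measurableSet_Ioo]
  congr 1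
  funext x
  congr 1
  funext z
  congr 1
  rw [sub_self, Real.rpow_zero, one_mul, div_inv_eq_mul, mul_comm]

lemma isProbabilityMeasure_betaMeasure_one {l : ℝ} (hl : 0 < l) :
    IsProbabilityMeasure (betaMeasure 1 l) := by
  constructor
  rw [betaMeasure_one_eq hl, withDensity_apply _ .univ, Measure.restrict_univ,
    lintegral_right_weight hl le_rfl zero_le_one]
  simp [Real.zero_rpow hl.ne']

lemma measurable_left_weight (l : ℝ) :
    Measurable fun y : ℝ => ENNReal.ofReal (l * y ^ (l - 1)) := by fun_prop

lemma measurable_right_weight (r : ℝ) :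
    Measurable fun y : ℝ => ENNReal.ofReal (r * (1 - y) ^ (r - 1)) := by fun_prop

/-- The law of the position after a jump to the left from `x`. -/
lemma left_jump_apply {l x : ℝ} (hl : 0 < l) (hx : 0 < x) {B : Set ℝ} (hB : MeasurableSet B) :
    betaMeasure 1 l ((fun t => x - x * t) ⁻¹' B) = ENNReal.ofReal (x ^ (-l)) *
      ∫⁻ y in Ioo 0 x, B.indicator (fun y => ENNReal.ofReal (l * y ^ (l - 1))) y := by
  have hm : Measurable fun t : ℝ => x - x * t := by fun_prop
  have himg : (fun t : ℝ => x - x * t) '' Ioo 0 1 = Ioo 0 x := by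
    ext y
    constructor
    · rintro ⟨t, ht, rfl⟩
      constructor <;> dsimp only <;> nlinarith [ht.1, ht.2]
    · intro hy
      refine ⟨(x - y) / x, ⟨div_pos (by linarith [hy.2]) hx, ?_⟩, ?_⟩
      · rw [div_lt_one hx]; linarith [hy.1]
      · field_simp; ring
  rw [betaMeasure_one_eq hl, withDensity_apply _ (hm hB), ← himg,
    lintegral_image_eq_lintegral_abs_deriv_mul measurableSet_Ioo (f' := fun _ => -x)
      (fun t _ => by
        simpa using (((hasDerivAt_id t).const_mul x).const_sub x).hasDerivWithinAt)
      (fun a _ b _ h => by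
        have h' : x * a = x * b := by simpa using h
        exact mul_left_cancel₀ hx.ne' h'),
    ← lintegral_const_mul' _ _ ENNReal.ofReal_ne_top, ← lintegral_indicator (hm hB)]
  refine setLIntegral_congr_fun measurableSet_Ioo fun t ht => ?_
  have h1 : 0 < 1 - t := by linarith [ht.2]
  by_cases hmem : x - x * t ∈ B
  · rw [indicator_of_mem (show t ∈ (fun t => x - x * t) ⁻¹' B from hmem), indicator_of_mem hmem,
      ← ENNReal.ofReal_mul (abs_nonneg _), ← ENNReal.ofReal_mul (by positivity)]
    congr 1
    have e : x - x * t = x * (1 - t) := by ring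
    rw [abs_neg, abs_of_pos hx, e, Real.mul_rpow hx.le h1.le]
    have : x ^ (-l) * x * x ^ (l - 1) = 1 := by
      rw [← Real.rpow_add_one hx.ne', ← Real.rpow_add hx]; simp
    linear_combination (- l * (1 - t) ^ (l - 1)) * this
  · rw [indicator_of_notMem (show t ∉ (fun t => x - x * t) ⁻¹' B from hmem),
      indicator_of_notMem hmem]
    simp

/-- The law of the position after a jump to the right from `x`. -/
lemma right_jump_apply {r x : ℝ} (hr : 0 < r) (hx : x < 1) {B : Set ℝ} (hB : MeasurableSet B) :
    betaMeasure 1 r ((fun t => x + (1 - x) * t) ⁻¹' B) = ENNReal.ofReal ((1 - x) ^ (-r)) *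
      ∫⁻ y in Ioo x 1, B.indicator (fun y => ENNReal.ofReal (r * (1 - y) ^ (r - 1))) y := by
  have hx' : 0 < 1 - x := by linarith
  have hm : Measurable fun t : ℝ => x + (1 - x) * t := by fun_prop
  have himg : (fun t : ℝ => x + (1 - x) * t) '' Ioo 0 1 = Ioo x 1 := by
    ext y
    constructor
    · rintro ⟨t, ht, rfl⟩
      constructor <;> dsimp only <;> nlinarith [ht.1, ht.2]
    · intro hy
      refine ⟨(y - x) / (1 - x), ⟨div_pos (by linarith [hy.1]) hx', ?_⟩, ?_⟩
      · rw [div_lt_one hx']; linarith [hy.2]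
      · field_simp; ring
  rw [betaMeasure_one_eq hr, withDensity_apply _ (hm hB), ← himg,
    lintegral_image_eq_lintegral_abs_deriv_mul measurableSet_Ioo (f' := fun _ => 1 - x)
      (fun t _ => by
        simpa using (((hasDerivAt_id t).const_mul (1 - x)).const_add x).hasDerivWithinAt)
      (fun a _ b _ h => by
        have h' : (1 - x) * a = (1 - x) * b := by simpa using h
        exact mul_left_cancel₀ hx'.ne' h'),
    ← lintegral_const_mul' _ _ ENNReal.ofReal_ne_top, ← lintegral_indicator (hm hB)]
  refine setLIntegral_congr_fun measurableSet_Ioo fun t ht => ?_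
  have h1 : 0 < 1 - t := by linarith [ht.2]
  by_cases hmem : x + (1 - x) * t ∈ B
  · rw [indicator_of_mem (show t ∈ (fun t => x + (1 - x) * t) ⁻¹' B from hmem),
      indicator_of_mem hmem, ← ENNReal.ofReal_mul (abs_nonneg _),
      ← ENNReal.ofReal_mul (by positivity)]
    congr 1
    have e : 1 - (x + (1 - x) * t) = (1 - x) * (1 - t) := by ring
    rw [abs_of_pos hx', e, Real.mul_rpow hx'.le h1.le]
    have : (1 - x) ^ (-r) * (1 - x) * (1 - x) ^ (r - 1) = 1 := by
      rw [← Real.rpow_add_one hx'.ne', ← Real.rpow_add hx']; simp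
    linear_combination (- r * (1 - t) ^ (r - 1)) * this
  · rw [indicator_of_notMem (show t ∉ (fun t => x + (1 - x) * t) ⁻¹' B from hmem),
      indicator_of_notMem hmem]
    simp

lemma measurable_step {p : ℝ → ℝ} (hp : Measurable p) :
    Measurable (Function.uncurry fun (x : ℝ) (w : ℝ × ℝ × ℝ) =>
      if w.2.2 < p x then x - x * w.1 else x + (1 - x) * w.2.1) := by
  refine Measurable.ite (measurableSet_lt (by fun_prop) (by fun_prop)) ?_ ?_ <;> fun_prop

instance isProbabilityMeasure_volume_Icc :
    IsProbabilityMeasure (volume.restrict (Icc (0 : ℝ) 1)) := ⟨by simp⟩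

section Kernel

variable {FL FR : Measure ℝ} [IsProbabilityMeasure FL] [IsProbabilityMeasure FR] {p : ℝ → ℝ}

lemma measurable_mcKernel (hp : Measurable p) : Measurable (mcKernel FL FR p) := by
  have h : mcKernel FL FR p = fun x => Measure.map (Function.uncurry fun (x : ℝ)
      (w : ℝ × ℝ × ℝ) => if w.2.2 < p x then x - x * w.1 else x + (1 - x) * w.2.1)
      (Measure.map (Prod.mk x) (FL.prod (FR.prod (volume.restrict (Icc (0 : ℝ) 1))))) := by
    funext x
    rw [Measure.map_map (measurable_step hp) measurable_prodMk_left]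
    rfl
  rw [h]
  exact (Measure.measurable_map _ (measurable_step hp)).comp Measurable.map_prodMk_left

lemma isProbabilityMeasure_mcKernel (hp : Measurable p) (x : ℝ) :
    IsProbabilityMeasure (mcKernel FL FR p x) :=
  Measure.isProbabilityMeasure_map
    ((measurable_step hp).comp measurable_prodMk_left).aemeasurable

/-- Conditioning on the coin `U`: the kernel is the mixture of the left and right jumps. -/
lemma mcKernel_apply (hp : Measurable p) {x : ℝ} (hx : p x ∈ Icc (0 : ℝ) 1) {B : Set ℝ}
    (hB : MeasurableSet B) :
    mcKernel FL FR p x B = ENNReal.ofReal (p x) * FL ((fun t => x - x * t) ⁻¹' B) +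
      ENNReal.ofReal (1 - p x) * FR ((fun t => x + (1 - x) * t) ⁻¹' B) := by
  have hstep : Measurable fun w : ℝ × ℝ × ℝ =>
      if w.2.2 < p x then x - x * w.1 else x + (1 - x) * w.2.1 :=
    (measurable_step hp).comp measurable_prodMk_left
  have hL : MeasurableSet ((fun t : ℝ => x - x * t) ⁻¹' B) :=
    (by fun_prop : Measurable fun t : ℝ => x - x * t) hB
  have hR : MeasurableSet ((fun t : ℝ => x + (1 - x) * t) ⁻¹' B) :=
    (by fun_prop : Measurable fun t : ℝ => x + (1 - x) * t) hB
  have hpre : (fun w : ℝ × ℝ × ℝ =>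
      if w.2.2 < p x then x - x * w.1 else x + (1 - x) * w.2.1) ⁻¹' B =
      ((fun t => x - x * t) ⁻¹' B) ×ˢ ((univ : Set ℝ) ×ˢ Iio (p x)) ∪
      (univ : Set ℝ) ×ˢ (((fun t => x + (1 - x) * t) ⁻¹' B) ×ˢ Ici (p x)) := by
    ext ⟨a, b, u⟩
    by_cases h : u < p x
    · simp [h]
    · simp [h, not_lt.1 h]
  have hdisj : Disjoint (((fun t => x - x * t) ⁻¹' B) ×ˢ ((univ : Set ℝ) ×ˢ Iio (p x)))
      ((univ : Set ℝ) ×ˢ (((fun t => x + (1 - x) * t) ⁻¹' B) ×ˢ Ici (p x))) := by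
    rw [Set.disjoint_left]
    rintro ⟨a, b, u⟩ h1 h2
    exact (not_le.2 (mem_Iio.1 h1.2.2)) (mem_Ici.1 h2.2.2)
  have v1 : volume.restrict (Icc (0 : ℝ) 1) (Iio (p x)) = ENNReal.ofReal (p x) := by
    rw [Measure.restrict_apply measurableSet_Iio,
      show Iio (p x) ∩ Icc 0 1 = Ico 0 (p x) by
        ext u; constructor
        · rintro ⟨h1, h2⟩; exact ⟨h2.1, h1⟩
        · rintro ⟨h1, h2⟩; exact ⟨h2, h1, h2.le.trans hx.2⟩]
    simp
  have v2 : volume.restrict (Icc (0 : ℝ) 1) (Ici (p x)) = ENNReal.ofReal (1 - p x) := by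
    rw [Measure.restrict_apply measurableSet_Ici,
      show Ici (p x) ∩ Icc 0 1 = Icc (p x) 1 by
        ext u; constructor
        · rintro ⟨h1, h2⟩; exact ⟨h1, h2.2⟩
        · rintro ⟨h1, h2⟩; exact ⟨h1, hx.1.trans h1, h2⟩]
    simp
  rw [mcKernel, Measure.map_apply hstep hB, hpre, measure_union hdisj
    (MeasurableSet.univ.prod (hR.prod measurableSet_Ici)), Measure.prod_prod, Measure.prod_prod,
    Measure.prod_prod, Measure.prod_prod, v1, v2]
  simp only [measure_univ, one_mul]
  ring

end Kernel

lemma lintegral_triangle {F G : ℝ → ℝ≥0∞} (hF : Measurable F) (hG : Measurable G) :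
    ∫⁻ x in Ioo (0 : ℝ) 1, F x * ∫⁻ y in Ioo 0 x, G y =
      ∫⁻ y in Ioo (0 : ℝ) 1, G y * ∫⁻ x in Ioo y 1, F x := by
  have h1 : ∀ x ∈ Ioo (0 : ℝ) 1, F x * ∫⁻ y in Ioo 0 x, G y =
      ∫⁻ y in Ioo (0 : ℝ) 1, {q : ℝ × ℝ | q.2 < q.1}.indicator
        (fun q => F q.1 * G q.2) (x, y) := by
    intro x hx
    have : Ioo 0 x = Iio x ∩ Ioo 0 1 := by
      ext y; constructor
      · rintro ⟨a, b⟩; exact ⟨b, a, b.trans hx.2⟩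
      · rintro ⟨a, b⟩; exact ⟨b.1, a⟩
    rw [this, ← Measure.restrict_restrict measurableSet_Iio, ← lintegral_const_mul _ hG,
      ← lintegral_indicator measurableSet_Iio]
    rfl
  have h2 : ∀ y ∈ Ioo (0 : ℝ) 1, G y * ∫⁻ x in Ioo y 1, F x =
      ∫⁻ x in Ioo (0 : ℝ) 1, {q : ℝ × ℝ | q.2 < q.1}.indicator
        (fun q => F q.1 * G q.2) (x, y) := by
    intro y hy
    have : Ioo y 1 = Ioi y ∩ Ioo 0 1 := by
      ext x; constructor
      · rintro ⟨a, b⟩; exact ⟨a, hy.1.trans a, b⟩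
      · rintro ⟨a, b⟩; exact ⟨a, b.2⟩
    rw [this, ← Measure.restrict_restrict measurableSet_Ioi, mul_comm, ← lintegral_mul_const _ hF,
      ← lintegral_indicator measurableSet_Ioi]
    rfl
  rw [setLIntegral_congr_fun measurableSet_Ioo h1, setLIntegral_congr_fun measurableSet_Ioo h2]
  refine lintegral_lintegral_swap (Measurable.aemeasurable ?_)
  exact Measurable.indicator (by fun_prop) (measurableSet_lt measurable_snd measurable_fst)

/-! ### The stationary density -/

section Density

variable {l r C : ℝ} {k : ℕ} {pc qc : ℕ → ℝ} {p : ℝ → ℝ}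

/-- The exponential factor of the stationary density. -/
noncomputable def expFactor (l r : ℝ) (k : ℕ) (pc qc : ℕ → ℝ) (x : ℝ) : ℝ :=
  Real.exp (r * ∑ n ∈ Finset.Icc 1 k, qc n / (n : ℝ) * (x - 1) ^ n -
    l * ∑ n ∈ Finset.Icc 1 k, pc n / (n : ℝ) * x ^ n)

/-- The function `g` for which the stationary density is `g(x) (l / x + r / (1 - x))`; the flow
balance of the chain is the equation `g' = g (l (1 - p) / x - r p / (1 - x))`. -/
noncomputable def flux (l r C : ℝ) (k : ℕ) (pc qc : ℕ → ℝ) (x : ℝ) : ℝ :=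
  C * x ^ (l * (1 - pc 0)) * (1 - x) ^ (r * qc 0) * expFactor l r k pc qc x

lemma expFactor_pos (x : ℝ) : 0 < expFactor l r k pc qc x := Real.exp_pos _

lemma continuous_expFactor : Continuous (expFactor l r k pc qc) := by
  unfold expFactor; fun_prop

lemma flux_nonneg (hC : 0 ≤ C) {x : ℝ} (hx : x ∈ Icc (0 : ℝ) 1) :
    0 ≤ flux l r C k pc qc x := by
  have h0 := hx.1
  have h1 : 0 ≤ 1 - x := by linarith [hx.2]
  have := (expFactor_pos (l := l) (r := r) (k := k) (pc := pc) (qc := qc) x).le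
  unfold flux
  positivity

lemma continuous_flux (hα : 0 ≤ l * (1 - pc 0)) (hβ : 0 ≤ r * qc 0) :
    Continuous (flux l r C k pc qc) := by
  have h1 := Real.continuous_rpow_const hα
  have h2 : Continuous fun x : ℝ => (1 - x) ^ (r * qc 0) :=
    (Real.continuous_rpow_const hβ).comp (by fun_prop)
  exact ((continuous_const.mul h1).mul h2).mul continuous_expFactor

lemma polyDens_eq_flux {x : ℝ} (hx : x ∈ Ioo (0 : ℝ) 1) :
    polyDens l r C k pc qc x = flux l r C k pc qc x * (l / x + r / (1 - x)) := by
  have h0 := hx.1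
  have h1 : 0 < 1 - x := by linarith [hx.2]
  have e1 : x ^ (l * (1 - pc 0) - 1) = x ^ (l * (1 - pc 0)) / x := Real.rpow_sub_one h0.ne' _
  have e2 : (1 - x) ^ (r * qc 0 - 1) = (1 - x) ^ (r * qc 0) / (1 - x) :=
    Real.rpow_sub_one h1.ne' _
  have h0' := h0.ne'
  have h1' := h1.ne'
  simp only [polyDens, flux, expFactor]
  rw [e1, e2]
  field_simp
  ring

lemma polyDens_pos (hl : 0 < l) (hr : 0 < r) (hC : 0 < C) {x : ℝ} (hx : x ∈ Ioo (0 : ℝ) 1) :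
    0 < polyDens l r C k pc qc x := by
  have h0 := hx.1
  have h1 : 0 < 1 - x := by linarith [hx.2]
  have := expFactor_pos (l := l) (r := r) (k := k) (pc := pc) (qc := qc) x
  rw [polyDens_eq_flux hx, flux]
  positivity

lemma measurable_polyDens : Measurable (polyDens l r C k pc qc) := by
  unfold polyDens; fun_prop

lemma hasDerivAt_sum_div (c : ℕ → ℝ) (a x : ℝ) :
    HasDerivAt (fun y : ℝ => ∑ n ∈ Finset.Icc 1 k, c n / (n : ℝ) * (y - a) ^ n)
      (∑ n ∈ Finset.Icc 1 k, c n * (x - a) ^ (n - 1)) x := by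
  refine HasDerivAt.fun_sum fun n hn => ?_
  have hn' : (n : ℝ) ≠ 0 := by
    have := (Finset.mem_Icc.1 hn).1
    positivity
  have h := ((((hasDerivAt_id x).sub_const a).pow n).const_mul (c n / (n : ℝ)))
  refine HasDerivAt.congr_deriv h ?_
  simp only [id]
  field_simp

lemma mul_sum_shift (c : ℕ → ℝ) (t : ℝ) :
    t * ∑ n ∈ Finset.Icc 1 k, c n * t ^ (n - 1) =
      (∑ n ∈ Finset.range (k + 1), c n * t ^ n) - c 0 := by
  rw [Finset.mul_sum, Finset.sum_range_eq_add_Ico _ (Nat.succ_pos k)]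
  simp only [pow_zero, mul_one, add_sub_cancel_left]
  refine Finset.sum_congr rfl fun n hn => ?_
  obtain ⟨m, rfl⟩ : ∃ m, n = m + 1 := ⟨n - 1, by have := (Finset.mem_Icc.1 hn).1; omega⟩
  rw [Nat.add_sub_cancel, pow_succ]
  ring

lemma hasDerivAt_flux (hp : ∀ x : ℝ, p x = ∑ n ∈ Finset.range (k + 1), pc n * x ^ n)
    (hq : ∀ x : ℝ, p x = ∑ n ∈ Finset.range (k + 1), qc n * (x - 1) ^ n)
    {x : ℝ} (hx : x ∈ Ioo (0 : ℝ) 1) :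
    HasDerivAt (flux l r C k pc qc)
      (flux l r C k pc qc x * (l * (1 - p x) / x - r * p x / (1 - x))) x := by
  have h0 := hx.1.ne'
  have h1 : 1 - x ≠ 0 := by linarith [hx.2]
  have dP : HasDerivAt (fun y : ℝ => ∑ n ∈ Finset.Icc 1 k, pc n / (n : ℝ) * y ^ n)
      (∑ n ∈ Finset.Icc 1 k, pc n * x ^ (n - 1)) x := by
    simpa using hasDerivAt_sum_div (k := k) pc 0 x
  have dQ := hasDerivAt_sum_div (k := k) qc 1 x
  have eP : ∑ n ∈ Finset.Icc 1 k, pc n * x ^ (n - 1) = (p x - pc 0) / x := by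
    rw [eq_div_iff h0, mul_comm, mul_sum_shift, hp]
  have eQ : ∑ n ∈ Finset.Icc 1 k, qc n * (x - 1) ^ (n - 1) = - ((p x - qc 0) / (1 - x)) := by
    rw [← div_neg, eq_div_iff (neg_ne_zero.2 h1), mul_comm, neg_sub, mul_sum_shift, hq]
  rw [eP] at dP
  rw [eQ] at dQ
  have dE : HasDerivAt (expFactor l r k pc qc) _ x := ((dQ.const_mul r).sub (dP.const_mul l)).exp
  have d1 := Real.hasDerivAt_rpow_const (p := l * (1 - pc 0)) (Or.inl h0)
  have d2 := ((hasDerivAt_id x).const_sub 1).rpow_const (p := r * qc 0) (Or.inl h1)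
  have d := ((d1.const_mul C).mul d2).mul dE
  refine HasDerivAt.congr_deriv d ?_
  have e1 : x ^ (l * (1 - pc 0) - 1) = x ^ (l * (1 - pc 0)) / x := Real.rpow_sub_one h0 _
  have e2 : (1 - x) ^ (r * qc 0 - 1) = (1 - x) ^ (r * qc 0) / (1 - x) :=
    Real.rpow_sub_one h1 _
  simp only [id, flux, Pi.mul_apply]
  rw [e1, e2]
  have e3 : Real.exp (((fun y => r * ∑ n ∈ Finset.Icc 1 k, qc n / (n : ℝ) * (y - 1) ^ n) -
    fun y => l * ∑ n ∈ Finset.Icc 1 k, pc n / (n : ℝ) * y ^ n) x) = expFactor l r k pc qc x := rfl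
  rw [e3]
  field_simp
  ring

/-- Mass arriving at `y` from the right: `∫_y^1 π p x^{-l} = y^{-l} g(y)`. -/
lemma lintegral_inflow_right (hl : 0 < l) (hr : 0 < r) (hC : 0 < C)
    (hp : ∀ x : ℝ, p x = ∑ n ∈ Finset.range (k + 1), pc n * x ^ n)
    (hq : ∀ x : ℝ, p x = ∑ n ∈ Finset.range (k + 1), qc n * (x - 1) ^ n)
    (hp01 : ∀ x ∈ Icc (0 : ℝ) 1, p x ∈ Icc (0 : ℝ) 1)
    (hp0 : pc 0 < 1) (hq0 : 0 < qc 0) {y : ℝ} (hy : y ∈ Ioo (0 : ℝ) 1) :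
    ∫⁻ x in Ioo y 1, ENNReal.ofReal (polyDens l r C k pc qc x * p x * x ^ (-l)) =
      ENNReal.ofReal (y ^ (-l) * flux l r C k pc qc y) := by
  have hα : 0 < l * (1 - pc 0) := mul_pos hl (by linarith)
  have hβ : 0 < r * qc 0 := by positivity
  rw [lintegral_Ioo_deriv (H := fun x => - (x ^ (-l) * flux l r C k pc qc x)) hy.2.le ?_
    (fun x hx => ?_) (fun x hx => ?_)]
  · simp [flux, Real.zero_rpow hβ.ne']
  · refine (ContinuousOn.mul (ContinuousOn.rpow_const continuousOn_id fun x hx => ?_)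
      (continuous_flux hα.le hβ.le).continuousOn).neg
    exact Or.inl (hy.1.trans_le hx.1).ne'
  · have hx' : x ∈ Ioo (0 : ℝ) 1 := ⟨hy.1.trans hx.1, hx.2⟩
    have h0 := hx'.1.ne'
    have h1 : 1 - x ≠ 0 := by linarith [hx.2]
    refine HasDerivAt.congr_deriv ((Real.hasDerivAt_rpow_const (p := -l) (Or.inl h0)).mul
      (hasDerivAt_flux hp hq hx')).neg ?_
    have e1 : x ^ (-l - 1) = x ^ (-l) / x := Real.rpow_sub_one h0 _
    rw [polyDens_eq_flux hx', e1]
    field_simp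
    ring
  · have hx' : x ∈ Ioo (0 : ℝ) 1 := ⟨hy.1.trans hx.1, hx.2⟩
    have := polyDens_pos (k := k) (pc := pc) (qc := qc) hl hr hC hx'
    have := (hp01 x ⟨hx'.1.le, hx'.2.le⟩).1
    have := hx'.1
    positivity

/-- Mass arriving at `y` from the left: `∫_0^y π (1 - p) (1 - x)^{-r} = (1 - y)^{-r} g(y)`. -/
lemma lintegral_inflow_left (hl : 0 < l) (hr : 0 < r) (hC : 0 < C)
    (hp : ∀ x : ℝ, p x = ∑ n ∈ Finset.range (k + 1), pc n * x ^ n)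
    (hq : ∀ x : ℝ, p x = ∑ n ∈ Finset.range (k + 1), qc n * (x - 1) ^ n)
    (hp01 : ∀ x ∈ Icc (0 : ℝ) 1, p x ∈ Icc (0 : ℝ) 1)
    (hp0 : pc 0 < 1) (hq0 : 0 < qc 0) {y : ℝ} (hy : y ∈ Ioo (0 : ℝ) 1) :
    ∫⁻ x in Ioo 0 y, ENNReal.ofReal (polyDens l r C k pc qc x * (1 - p x) * (1 - x) ^ (-r)) =
      ENNReal.ofReal ((1 - y) ^ (-r) * flux l r C k pc qc y) := by
  have hα : 0 < l * (1 - pc 0) := mul_pos hl (by linarith)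
  have hβ : 0 < r * qc 0 := by positivity
  rw [lintegral_Ioo_deriv (H := fun x => (1 - x) ^ (-r) * flux l r C k pc qc x) hy.1.le ?_
    (fun x hx => ?_) (fun x hx => ?_)]
  · simp [flux, Real.zero_rpow hα.ne']
  · refine ContinuousOn.mul (ContinuousOn.rpow_const (by fun_prop) fun x hx => ?_)
      (continuous_flux hα.le hβ.le).continuousOn
    exact Or.inl (by linarith [hx.2, hy.2])
  · have hx' : x ∈ Ioo (0 : ℝ) 1 := ⟨hx.1, hx.2.trans hy.2⟩
    have h0 := hx'.1.ne'
    have h1 : 1 - x ≠ 0 := by linarith [hx'.2]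
    refine HasDerivAt.congr_deriv ((((hasDerivAt_id x).const_sub 1).rpow_const (p := -r)
      (Or.inl h1)).mul (hasDerivAt_flux hp hq hx')) ?_
    have e1 : (1 - x) ^ (-r - 1) = (1 - x) ^ (-r) / (1 - x) := Real.rpow_sub_one h1 _
    simp only [id]
    rw [polyDens_eq_flux hx', e1]
    field_simp
    ring
  · have hx' : x ∈ Ioo (0 : ℝ) 1 := ⟨hx.1, hx.2.trans hy.2⟩
    have := polyDens_pos (k := k) (pc := pc) (qc := qc) hl hr hC hx'
    have : 0 ≤ 1 - p x := by linarith [(hp01 x ⟨hx'.1.le, hx'.2.le⟩).2]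
    have : 0 < 1 - x := by linarith [hx'.2]
    positivity

lemma integrableOn_polyDens (hα : 0 < l * (1 - pc 0)) (hβ : 0 < r * qc 0) :
    IntegrableOn (polyDens l r C k pc qc) (Ioo 0 1) := by
  have hb : IntegrableOn (fun x : ℝ => x ^ (l * (1 - pc 0) - 1) * (1 - x) ^ (r * qc 0 - 1))
      (Ioo 0 1) := by
    have h := ProbabilityTheory.lintegral_betaPDF_eq_one hα hβ
    have hpos := ProbabilityTheory.beta_pos hα hβ
    rw [ProbabilityTheory.lintegral_betaPDF] at h
    set c := ProbabilityTheory.beta (l * (1 - pc 0)) (r * qc 0)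
    have hi : IntegrableOn (fun x : ℝ => 1 / c * x ^ (l * (1 - pc 0) - 1) *
        (1 - x) ^ (r * qc 0 - 1)) (Ioo 0 1) := by
      refine ⟨Measurable.aestronglyMeasurable (by fun_prop), ?_⟩
      rw [hasFiniteIntegral_iff_ofReal, h]
      · exact ENNReal.one_lt_top
      · refine (ae_restrict_iff' measurableSet_Ioo).2 (ae_of_all _ fun x hx => ?_)
        have h0 := hx.1
        have h1 : 0 < 1 - x := by linarith [hx.2]
        simp only [Pi.zero_apply]
        positivity
    refine (Integrable.const_mul hi c).congr (ae_of_all _ fun x => ?_)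
    field_simp
  have hcont : Continuous fun x : ℝ => C * (l + (r - l) * x) * expFactor l r k pc qc x := by
    have := continuous_expFactor (l := l) (r := r) (k := k) (pc := pc) (qc := qc)
    fun_prop
  have hcb : IntegrableOn (fun x : ℝ => (C * (l + (r - l) * x) * expFactor l r k pc qc x) *
      (x ^ (l * (1 - pc 0) - 1) * (1 - x) ^ (r * qc 0 - 1))) (Ioo 0 1) := by
    obtain ⟨M, hM⟩ := isCompact_Icc.exists_bound_of_continuousOn (hcont.continuousOn (s := Icc 0 1))
    refine Integrable.bdd_mul (c := M) hb hcont.aestronglyMeasurable ?_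
    exact (ae_restrict_iff' measurableSet_Ioo).2
      (ae_of_all _ fun x hx => hM x ⟨hx.1.le, hx.2.le⟩)
  refine Integrable.congr hcb (ae_of_all _ fun x => ?_)
  simp only [polyDens, expFactor]
  ring

lemma exists_normalising (hl : 0 < l) (hr : 0 < r) (hp0 : pc 0 < 1) (hq0 : 0 < qc 0) :
    ∃ C : ℝ, 0 < C ∧ (∫ x in Ioo (0 : ℝ) 1, polyDens l r C k pc qc x) = 1 := by
  have hα : 0 < l * (1 - pc 0) := mul_pos hl (by linarith)
  have hβ : 0 < r * qc 0 := by positivity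
  have hpos : 0 < ∫ x in Ioo (0 : ℝ) 1, polyDens l r 1 k pc qc x := by
    rw [setIntegral_pos_iff_support_of_nonneg_ae _ (integrableOn_polyDens hα hβ)]
    · have : Ioo (0 : ℝ) 1 ⊆ Function.support (polyDens l r 1 k pc qc) ∩ Ioo 0 1 :=
        fun x hx => ⟨(polyDens_pos hl hr one_pos hx).ne', hx⟩
      exact lt_of_lt_of_le (by simp) (measure_mono this)
    · exact (ae_restrict_iff' measurableSet_Ioo).2
        (ae_of_all _ fun x hx => (polyDens_pos hl hr one_pos hx).le)
  refine ⟨(∫ x in Ioo (0 : ℝ) 1, polyDens l r 1 k pc qc x)⁻¹, inv_pos.2 hpos, ?_⟩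
  have : ∀ c x, polyDens l r c k pc qc x = c * polyDens l r 1 k pc qc x := by
    intro c x; simp only [polyDens]; ring
  simp_rw [this (∫ x in Ioo (0 : ℝ) 1, polyDens l r 1 k pc qc x)⁻¹]
  rw [integral_const_mul, inv_mul_cancel₀ hpos.ne']

/-- Stationarity: the density is a fixed point of the kernel. -/
lemma bind_mcKernel_polyDens (hl : 0 < l) (hr : 0 < r) (hC : 0 < C)
    (hp : ∀ x : ℝ, p x = ∑ n ∈ Finset.range (k + 1), pc n * x ^ n)
    (hq : ∀ x : ℝ, p x = ∑ n ∈ Finset.range (k + 1), qc n * (x - 1) ^ n)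
    (hp01 : ∀ x ∈ Icc (0 : ℝ) 1, p x ∈ Icc (0 : ℝ) 1)
    (hp0 : pc 0 < 1) (hq0 : 0 < qc 0) (hpm : Measurable p) :
    ((volume.restrict (Ioo (0 : ℝ) 1)).withDensity
        fun x => ENNReal.ofReal (polyDens l r C k pc qc x)).bind
      (mcKernel (betaMeasure 1 l) (betaMeasure 1 r) p) =
    (volume.restrict (Ioo (0 : ℝ) 1)).withDensity
        fun x => ENNReal.ofReal (polyDens l r C k pc qc x) := by
  have := isProbabilityMeasure_betaMeasure_one hl
  have := isProbabilityMeasure_betaMeasure_one hr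
  have hκ := measurable_mcKernel (FL := betaMeasure 1 l) (FR := betaMeasure 1 r) hpm
  have hπm : Measurable fun x => ENNReal.ofReal (polyDens l r C k pc qc x) :=
    measurable_polyDens.ennreal_ofReal
  ext B hB
  have hκB : Measurable fun x => mcKernel (betaMeasure 1 l) (betaMeasure 1 r) p x B :=
    (Measure.measurable_coe hB).comp hκ
  rw [Measure.bind_apply hB hκ.aemeasurable, lintegral_withDensity_eq_lintegral_mul _ hπm hκB, withDensity_apply _ hB, ← lintegral_indicator hB]
  set wl : ℝ → ℝ≥0∞ := B.indicator (fun y => ENNReal.ofReal (l * y ^ (l - 1))) with hwl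
  set wr : ℝ → ℝ≥0∞ := B.indicator (fun y => ENNReal.ofReal (r * (1 - y) ^ (r - 1))) with hwr
  have hwlm : Measurable wl := (measurable_left_weight l).indicator hB
  have hwrm : Measurable wr := (measurable_right_weight r).indicator hB
  set Fl : ℝ → ℝ≥0∞ := fun x => ENNReal.ofReal (polyDens l r C k pc qc x * p x * x ^ (-l)) with hFl
  set Fr : ℝ → ℝ≥0∞ := fun x =>
    ENNReal.ofReal (polyDens l r C k pc qc x * (1 - p x) * (1 - x) ^ (-r)) with hFr
  have hπ := measurable_polyDens (l := l) (r := r) (C := C) (k := k) (pc := pc) (qc := qc)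
  have hFlm : Measurable Fl := by fun_prop
  have hFrm : Measurable Fr := by fun_prop
  have step : ∀ x ∈ Ioo (0 : ℝ) 1, ((fun x => ENNReal.ofReal (polyDens l r C k pc qc x)) *
      fun x => mcKernel (betaMeasure 1 l) (betaMeasure 1 r) p x B) x =
      Fl x * (∫⁻ y in Ioo 0 x, wl y) + Fr x * ∫⁻ y in Ioo x 1, wr y := by
    intro x hx
    have h0 := hx.1
    have h1 : 0 < 1 - x := by linarith [hx.2]
    have hpx := hp01 x ⟨hx.1.le, hx.2.le⟩
    have hπ0 := (polyDens_pos (k := k) (pc := pc) (qc := qc) hl hr hC hx).le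
    have hp1 : 0 ≤ 1 - p x := by linarith [hpx.2]
    simp only [Pi.mul_apply]
    rw [mcKernel_apply hpm hpx hB, left_jump_apply hl hx.1 hB, right_jump_apply hr hx.2 hB, hFl,
      hFr]
    simp only
    rw [ENNReal.ofReal_mul (mul_nonneg hπ0 hpx.1), ENNReal.ofReal_mul hπ0,
      ENNReal.ofReal_mul (mul_nonneg hπ0 hp1), ENNReal.ofReal_mul hπ0]
    ring
  have hswap : ∫⁻ x in Ioo (0 : ℝ) 1, Fr x * ∫⁻ y in Ioo x 1, wr y =
      ∫⁻ y in Ioo (0 : ℝ) 1, wr y * ∫⁻ x in Ioo 0 y, Fr x := (lintegral_triangle hwrm hFrm).symm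
  have m1 : Measurable fun x => Fl x * ∫⁻ y in Ioo 0 x, wl y := by
    refine hFlm.mul ?_
    have : (fun x => ∫⁻ y in Ioo 0 x, wl y) =
        fun x => ∫⁻ y, {q : ℝ × ℝ | 0 < q.2 ∧ q.2 < q.1}.indicator (fun q => wl q.2) (x, y) := by
      funext x
      rw [← lintegral_indicator measurableSet_Ioo]; rfl
    rw [this]
    exact Measurable.lintegral_prod_right' (Measurable.indicator (by fun_prop)
      ((measurableSet_lt measurable_const measurable_snd).inter
        (measurableSet_lt measurable_snd measurable_fst)))
  have m2 : Measurable fun y => wl y * ∫⁻ x in Ioo y 1, Fl x := by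
    refine hwlm.mul ?_
    have : (fun y => ∫⁻ x in Ioo y 1, Fl x) =
        fun y => ∫⁻ x, {q : ℝ × ℝ | q.1 < q.2 ∧ q.2 < 1}.indicator (fun q => Fl q.2) (y, x) := by
      funext x
      rw [← lintegral_indicator measurableSet_Ioo]; rfl
    rw [this]
    exact Measurable.lintegral_prod_right' (Measurable.indicator (by fun_prop)
      ((measurableSet_lt measurable_fst measurable_snd).inter
        (measurableSet_lt measurable_snd measurable_const)))
  rw [setLIntegral_congr_fun measurableSet_Ioo step, lintegral_add_left m1,
    lintegral_triangle hFlm hwlm, hswap, ← lintegral_add_left m2]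
  refine setLIntegral_congr_fun measurableSet_Ioo fun y hy => ?_
  have h0 := hy.1
  have h1 : 0 < 1 - y := by linarith [hy.2]
  have hg := flux_nonneg (l := l) (r := r) (k := k) (pc := pc) (qc := qc) hC.le
    ⟨hy.1.le, hy.2.le⟩
  rw [lintegral_inflow_right hl hr hC hp hq hp01 hp0 hq0 hy,
    lintegral_inflow_left hl hr hC hp hq hp01 hp0 hq0 hy]
  by_cases hyB : y ∈ B
  · rw [hwl, hwr, indicator_of_mem hyB, indicator_of_mem hyB, indicator_of_mem hyB,
      ← ENNReal.ofReal_mul (by positivity), ← ENNReal.ofReal_mul (by positivity),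
      ← ENNReal.ofReal_add (by positivity) (by positivity), polyDens_eq_flux hy]
    congr 1
    have a1 : y ^ (l - 1) * y ^ (-l) = 1 / y := by
      rw [← Real.rpow_add h0, show l - 1 + -l = -1 by ring, Real.rpow_neg_one, one_div]
    have a2 : (1 - y) ^ (r - 1) * (1 - y) ^ (-r) = 1 / (1 - y) := by
      rw [← Real.rpow_add h1, show r - 1 + -r = -1 by ring, Real.rpow_neg_one, one_div]
    linear_combination l * flux l r C k pc qc y * a1 + r * flux l r C k pc qc y * a2
  · simp [hwl, hwr, hyB]

end Density

/-! ### Minorization of the two-step kernel -/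

section Minorization

variable {l r : ℝ} {p : ℝ → ℝ}

lemma mcKernel_ge_left (hl : 0 < l) (hr : 0 < r) (hpm : Measurable p) {x ε : ℝ} (hx0 : 0 < x)
    (hx1 : x ≤ 1) (hpx : p x ∈ Icc (0 : ℝ) 1) (hε : ε ≤ p x) {B : Set ℝ} (hB : MeasurableSet B) :
    ENNReal.ofReal ε *
        ∫⁻ y in Ioo 0 x, B.indicator (fun y => ENNReal.ofReal (l * y ^ (l - 1))) y ≤
      mcKernel (betaMeasure 1 l) (betaMeasure 1 r) p x B := by
  have := isProbabilityMeasure_betaMeasure_one hl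
  have := isProbabilityMeasure_betaMeasure_one hr
  rw [mcKernel_apply hpm hpx hB, left_jump_apply hl hx0 hB]
  refine le_trans ?_ le_self_add
  have h1 : 1 ≤ ENNReal.ofReal (x ^ (-l)) :=
    ENNReal.one_le_ofReal.2 (Real.one_le_rpow_of_pos_of_le_one_of_nonpos hx0 hx1 (by linarith))
  exact mul_le_mul' (ENNReal.ofReal_le_ofReal hε) (le_mul_of_one_le_left' h1)

lemma mcKernel_ge_right (hl : 0 < l) (hr : 0 < r) (hpm : Measurable p) {x ε : ℝ} (hx0 : 0 ≤ x)
    (hx1 : x < 1) (hpx : p x ∈ Icc (0 : ℝ) 1) (hε : ε ≤ 1 - p x) {B : Set ℝ}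
    (hB : MeasurableSet B) :
    ENNReal.ofReal ε *
        ∫⁻ y in Ioo x 1, B.indicator (fun y => ENNReal.ofReal (r * (1 - y) ^ (r - 1))) y ≤
      mcKernel (betaMeasure 1 l) (betaMeasure 1 r) p x B := by
  have := isProbabilityMeasure_betaMeasure_one hl
  have := isProbabilityMeasure_betaMeasure_one hr
  rw [mcKernel_apply hpm hpx hB, right_jump_apply hr hx1 hB]
  refine le_trans ?_ le_add_self
  have h1 : 1 ≤ ENNReal.ofReal ((1 - x) ^ (-r)) :=
    ENNReal.one_le_ofReal.2 (Real.one_le_rpow_of_pos_of_le_one_of_nonpos (by linarith)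
      (by linarith) (by linarith))
  exact mul_le_mul' (ENNReal.ofReal_le_ofReal hε) (le_mul_of_one_le_left' h1)

lemma le_rpow_sub_one {δ z a : ℝ} (hδ : 0 < δ) (hz : δ ≤ z) (hz1 : z ≤ 1) (ha : 0 < a) :
    δ ^ a ≤ z ^ (a - 1) := by
  have hz0 : 0 < z := hδ.trans_le hz
  calc δ ^ a ≤ z ^ a := Real.rpow_le_rpow hδ.le hz ha.le
    _ ≤ z ^ (a - 1) := Real.rpow_le_rpow_of_exponent_ge hz0 hz1 (by linarith)

/-- A lower bound for an integral of `w` over `B ∩ J` by a multiple of Lebesgue measure on a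
subinterval on which `w` is bounded below. -/
lemma const_mul_volume_le {I J B : Set ℝ} (hI : MeasurableSet I) (hIJ : I ⊆ J)
    (hB : MeasurableSet B) {w : ℝ → ℝ≥0∞} {c : ℝ≥0∞} (hw : ∀ y ∈ I, c ≤ w y) :
    c * volume.restrict I B ≤ ∫⁻ y in J, B.indicator w y := by
  calc c * volume.restrict I B = ∫⁻ y in I, B.indicator (fun _ => c) y := by
        rw [lintegral_indicator hB, lintegral_const, Measure.restrict_apply .univ, univ_inter]
    _ ≤ ∫⁻ y in I, B.indicator w y := by
        refine setLIntegral_mono' hI fun y hy => ?_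
        by_cases hyB : y ∈ B
        · simpa [hyB] using hw y hy
        · simp [hyB]
    _ ≤ _ := lintegral_mono_set hIJ

lemma bind_ge {κ : ℝ → Measure ℝ} (hκ : Measurable κ) {x : ℝ} {A B : Set ℝ}
    (hA : MeasurableSet A) (hB : MeasurableSet B) {a v : ℝ≥0∞} (h1 : a ≤ κ x A)
    (h2 : ∀ y ∈ A, v ≤ κ y B) : v * a ≤ (κ x).bind κ B := by
  rw [Measure.bind_apply hB hκ.aemeasurable]
  calc v * a ≤ v * κ x A := by gcongr
    _ = ∫⁻ _ in A, v ∂κ x := by rw [setLIntegral_const]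
    _ ≤ ∫⁻ y in A, κ y B ∂κ x := setLIntegral_mono' hA h2
    _ ≤ _ := setLIntegral_le_lintegral _ _

/-- Near `0` the chain can jump right and near `1` it can jump left, while from a middle point at
least one of the two jumps has probability at least `1 / 2`. -/
lemma exists_margin (hpc : Continuous p) (h0 : p 0 < 1) (h1 : 0 < p 1) :
    ∃ ε δ : ℝ, 0 < ε ∧ 0 < δ ∧ δ < 1 / 2 ∧ ∀ x ∈ Icc (0 : ℝ) 1,
      (ε ≤ 1 - p x ∧ x ≤ 1 - δ) ∨ (ε ≤ p x ∧ δ ≤ x) := by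
  set ε := min (min ((1 - p 0) / 2) (p 1 / 2)) (1 / 2) with hε
  have e1 : ε ≤ (1 - p 0) / 2 := (min_le_left _ _).trans (min_le_left _ _)
  have e2 : ε ≤ p 1 / 2 := (min_le_left _ _).trans (min_le_right _ _)
  have e3 : ε ≤ 1 / 2 := min_le_right _ _
  have hεpos : 0 < ε := lt_min (lt_min (by linarith) (by linarith)) (by norm_num)
  have n0 : ∀ᶠ x in 𝓝 (0 : ℝ), p x < 1 - ε :=
    (hpc.tendsto 0).eventually (gt_mem_nhds (by linarith))
  have n1 : ∀ᶠ x in 𝓝 (1 : ℝ), ε < p x :=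
    (hpc.tendsto 1).eventually (lt_mem_nhds (by linarith))
  obtain ⟨d0, hd0, H0⟩ := Metric.eventually_nhds_iff.1 n0
  obtain ⟨d1, hd1, H1⟩ := Metric.eventually_nhds_iff.1 n1
  refine ⟨ε, min (min d0 d1) (1 / 4), hεpos, lt_min (lt_min hd0 hd1) (by norm_num),
    (min_le_right _ _).trans_lt (by norm_num), fun x hx => ?_⟩
  have m0 : min (min d0 d1) (1 / 4) ≤ d0 := (min_le_left _ _).trans (min_le_left _ _)
  have m1 : min (min d0 d1) (1 / 4) ≤ d1 := (min_le_left _ _).trans (min_le_right _ _)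
  have m2 : min (min d0 d1) (1 / 4) ≤ (1 : ℝ) / 4 := min_le_right _ _
  set δ := min (min d0 d1) (1 / 4)
  rcases lt_or_ge x δ with h | h
  · left
    have := H0 (y := x) (by rw [Real.dist_eq, sub_zero, abs_of_nonneg hx.1]; linarith)
    constructor <;> linarith
  rcases lt_or_ge (1 - δ) x with h' | h'
  · right
    have := H1 (y := x) (by
      rw [Real.dist_eq, abs_sub_comm, abs_of_nonneg (by linarith [hx.2])]; linarith)
    constructor <;> linarith
  rcases le_total (p x) (1 / 2) with h2 | h2
  · left; constructor <;> linarith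
  · right; constructor <;> linarith

/-- Two-step minorization. A jump to one end of the interval followed by a jump back spreads mass
over the middle, with a density bounded below uniformly in the starting point. -/
lemma exists_minorization (hl : 0 < l) (hr : 0 < r) (hpc : Continuous p)
    (hp01 : ∀ x ∈ Icc (0 : ℝ) 1, p x ∈ Icc (0 : ℝ) 1) (h0 : p 0 < 1) (h1 : 0 < p 1) :
    ∃ lam : Measure ℝ, IsFiniteMeasure lam ∧ lam ≠ 0 ∧ ∀ x ∈ Icc (0 : ℝ) 1,
      lam ≤ (mcKernel (betaMeasure 1 l) (betaMeasure 1 r) p x).bind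
        (mcKernel (betaMeasure 1 l) (betaMeasure 1 r) p) := by
  have := isProbabilityMeasure_betaMeasure_one hl
  have := isProbabilityMeasure_betaMeasure_one hr
  have hpm := hpc.measurable
  have hκ := measurable_mcKernel (FL := betaMeasure 1 l) (FR := betaMeasure 1 r) hpm
  obtain ⟨ε, δ, hε, hδ, hδ2, H⟩ := exists_margin hpc h0 h1
  set I := Ioo δ (1 - δ) with hI
  have hδl : 0 < δ ^ l := Real.rpow_pos_of_pos hδ l
  have hδr : 0 < δ ^ r := Real.rpow_pos_of_pos hδ r
  -- the return jump has density at least `l δ^l` (or `r δ^r`) on `I`; `ε δ^r` (or `ε δ^l`) bounds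
  -- the probability of the first jump to the end of the interval
  set c := min (ε * (l * δ ^ l) * (ε * δ ^ r)) (ε * (r * δ ^ r) * (ε * δ ^ l)) with hc
  have hcpos : 0 < c := lt_min (by positivity) (by positivity)
  refine ⟨ENNReal.ofReal c • volume.restrict I, ⟨?_⟩, ?_, fun x hx => ?_⟩
  · simp only [Measure.smul_apply, smul_eq_mul]
    exact ENNReal.mul_lt_top ENNReal.ofReal_lt_top (measure_lt_top _ _)
  · intro h
    have h' := congrArg (fun m : Measure ℝ => m univ) h
    simp only [Measure.smul_apply, smul_eq_mul, Measure.restrict_apply_univ, hI, Real.volume_Ioo,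
      Measure.coe_zero, Pi.zero_apply, mul_eq_zero, ENNReal.ofReal_eq_zero] at h'
    rcases h' with h' | h' <;> linarith
  · refine Measure.le_iff.2 fun B hB => ?_
    simp only [Measure.smul_apply, smul_eq_mul]
    rcases H x hx with ⟨hpx, hxδ⟩ | ⟨hpx, hxδ⟩
    · have s1 : ENNReal.ofReal (ε * δ ^ r) ≤
          mcKernel (betaMeasure 1 l) (betaMeasure 1 r) p x (Ioo (1 - δ) 1) := by
        refine le_trans (le_of_eq ?_) (mcKernel_ge_right hl hr hpm hx.1 (by linarith) (hp01 x hx)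
          hpx measurableSet_Ioo)
        rw [setLIntegral_indicator measurableSet_Ioo, inter_eq_left.2 (Ioo_subset_Ioo_left hxδ),
          lintegral_right_weight hr le_rfl (by linarith), ENNReal.ofReal_mul hε.le]
        simp [Real.zero_rpow hr.ne']
      have s2 : ∀ y ∈ Ioo (1 - δ) 1, ENNReal.ofReal ε * (ENNReal.ofReal (l * δ ^ l) *
          volume.restrict I B) ≤ mcKernel (betaMeasure 1 l) (betaMeasure 1 r) p y B := by
        intro y hy
        have hyI : y ∈ Icc (0 : ℝ) 1 := ⟨by linarith [hy.1], hy.2.le⟩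
        have hpy : ε ≤ p y := by
          rcases H y hyI with h | h
          · linarith [h.2, hy.1]
          · exact h.1
        refine le_trans ?_ (mcKernel_ge_left hl hr hpm (by linarith [hy.1]) hy.2.le (hp01 y hyI)
          hpy hB)
        gcongr
        refine const_mul_volume_le measurableSet_Ioo (Ioo_subset_Ioo hδ.le hy.1.le) hB
          fun z hz => ENNReal.ofReal_le_ofReal ?_
        exact mul_le_mul_of_nonneg_left
          (le_rpow_sub_one hδ hz.1.le (by linarith [hz.2]) hl) hl.le
      refine le_trans ?_ (bind_ge hκ measurableSet_Ioo hB s1 s2)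
      calc ENNReal.ofReal c * volume.restrict I B
          ≤ ENNReal.ofReal (ε * (l * δ ^ l) * (ε * δ ^ r)) * volume.restrict I B := by
            gcongr
            exact min_le_left _ _
        _ = _ := by
            rw [ENNReal.ofReal_mul (by positivity), ENNReal.ofReal_mul hε.le]
            ring
    · have s1 : ENNReal.ofReal (ε * δ ^ l) ≤
          mcKernel (betaMeasure 1 l) (betaMeasure 1 r) p x (Ioo 0 δ) := by
        refine le_trans (le_of_eq ?_) (mcKernel_ge_left hl hr hpm (by linarith) hx.2 (hp01 x hx)
          hpx measurableSet_Ioo)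
        rw [setLIntegral_indicator measurableSet_Ioo, inter_eq_left.2 (Ioo_subset_Ioo_right hxδ),
          lintegral_left_weight hl le_rfl hδ.le, ENNReal.ofReal_mul hε.le]
        simp [Real.zero_rpow hl.ne']
      have s2 : ∀ y ∈ Ioo 0 δ, ENNReal.ofReal ε * (ENNReal.ofReal (r * δ ^ r) *
          volume.restrict I B) ≤ mcKernel (betaMeasure 1 l) (betaMeasure 1 r) p y B := by
        intro y hy
        have hyI : y ∈ Icc (0 : ℝ) 1 := ⟨hy.1.le, by linarith [hy.2]⟩
        have hpy : ε ≤ 1 - p y := by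
          rcases H y hyI with h | h
          · exact h.1
          · linarith [h.2, hy.2]
        refine le_trans ?_ (mcKernel_ge_right hl hr hpm hy.1.le (by linarith [hy.2]) (hp01 y hyI)
          hpy hB)
        gcongr
        refine const_mul_volume_le measurableSet_Ioo (Ioo_subset_Ioo hy.2.le (by linarith)) hB
          fun z hz => ENNReal.ofReal_le_ofReal ?_
        exact mul_le_mul_of_nonneg_left
          (le_rpow_sub_one hδ (by linarith [hz.2]) (by linarith [hz.1]) hr) hr.le
      refine le_trans ?_ (bind_ge hκ measurableSet_Ioo hB s1 s2)
      calc ENNReal.ofReal c * volume.restrict I B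
          ≤ ENNReal.ofReal (ε * (r * δ ^ r) * (ε * δ ^ l)) * volume.restrict I B := by
            gcongr
            exact min_le_right _ _
        _ = _ := by
            rw [ENNReal.ofReal_mul (by positivity), ENNReal.ofReal_mul hε.le]
            ring

lemma mcKernel_mem_Icc (hl : 0 < l) (hr : 0 < r) (hpm : Measurable p)
    (hp01 : ∀ x ∈ Icc (0 : ℝ) 1, p x ∈ Icc (0 : ℝ) 1) {x : ℝ} (hx : x ∈ Icc (0 : ℝ) 1) :
    ∀ᵐ y ∂mcKernel (betaMeasure 1 l) (betaMeasure 1 r) p x, y ∈ Icc (0 : ℝ) 1 := by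
  have := isProbabilityMeasure_betaMeasure_one hl
  have := isProbabilityMeasure_betaMeasure_one hr
  have hnull : ∀ {a : ℝ}, 0 < a → betaMeasure 1 a (Ioo (0 : ℝ) 1)ᶜ = 0 := by
    intro a ha
    rw [betaMeasure_one_eq ha]
    refine withDensity_absolutelyContinuous _ _ ?_
    rw [Measure.restrict_apply measurableSet_Ioo.compl, compl_inter_self, measure_empty]
  rw [ae_iff, show {y | y ∉ Icc (0 : ℝ) 1} = (Icc (0 : ℝ) 1)ᶜ from rfl,
    mcKernel_apply hpm (hp01 x hx) measurableSet_Icc.compl]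
  have h1 : betaMeasure 1 l ((fun t => x - x * t) ⁻¹' (Icc (0 : ℝ) 1)ᶜ) = 0 := by
    refine measure_mono_null (fun t ht => ?_) (hnull hl)
    refine fun ht' : t ∈ Ioo (0 : ℝ) 1 => ht ?_
    constructor <;> dsimp only <;> nlinarith [ht'.1, ht'.2, hx.1, hx.2]
  have h2 : betaMeasure 1 r ((fun t => x + (1 - x) * t) ⁻¹' (Icc (0 : ℝ) 1)ᶜ) = 0 := by
    refine measure_mono_null (fun t ht => ?_) (hnull hr)
    refine fun ht' : t ∈ Ioo (0 : ℝ) 1 => ht ?_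
    constructor <;> dsimp only <;> nlinarith [ht'.1, ht'.2, hx.1, hx.2]
  rw [h1, h2, mul_zero, mul_zero, add_zero]

end Minorization

/-- For polynomial `p` with `p([0,1]) ⊆ [0,1]`, `p₀ = p(0) < 1`, `q₀ = p(1) > 0`, and
`F_L = Beta(1,l)`, `F_R = Beta(1,r)`, the chain is ergodic with stationary density
`π(x) = C x^{l(1-p₀)-1} (1-x)^{r q₀-1} (l + (r-l)x)
  exp(r Σ_{n=1}^k (qₙ/n)(x-1)ⁿ - l Σ_{n=1}^k (pₙ/n)xⁿ)`. -/
theorem stmt12 (l r : ℝ) (hl : 0 < l) (hr : 0 < r)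
    (k : ℕ) (pc qc : ℕ → ℝ) (p : ℝ → ℝ)
    (hp : ∀ x : ℝ, p x = ∑ n ∈ Finset.range (k + 1), pc n * x ^ n)
    (hq : ∀ x : ℝ, p x = ∑ n ∈ Finset.range (k + 1), qc n * (x - 1) ^ n)
    (hp01 : ∀ x ∈ Icc (0 : ℝ) 1, p x ∈ Icc (0 : ℝ) 1)
    (hp0 : pc 0 < 1) (hq0 : 0 < qc 0)
    (FL FR : Measure ℝ) (hFL : FL = betaMeasure 1 l) (hFR : FR = betaMeasure 1 r) :
    ∃ μ : Measure ℝ, IsProbabilityMeasure μ ∧ μ (Icc 0 1) = 1 ∧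
      μ.bind (mcKernel FL FR p) = μ ∧
      (∀ ν : Measure ℝ, IsProbabilityMeasure ν → ν (Icc 0 1) = 1 →
        ν.bind (mcKernel FL FR p) = ν → ν = μ) ∧
      (∀ x ∈ Icc (0 : ℝ) 1,
        Tendsto (fun n => tvDist (iterLaw (mcKernel FL FR p) x n) μ) atTop (nhds 0)) ∧
      ∃ C : ℝ, 0 < C ∧ (∫ x in Ioo (0 : ℝ) 1, polyDens l r C k pc qc x) = 1 ∧
        μ = volume.withDensity fun x =>
          indicator (Ioo (0 : ℝ) 1) (fun z => ENNReal.ofReal (polyDens l r C k pc qc z)) x := by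
  subst hFL hFR
  have hFLp := isProbabilityMeasure_betaMeasure_one hl
  have hFRp := isProbabilityMeasure_betaMeasure_one hr
  have hpc : Continuous p := by
    rw [funext hp]
    fun_prop
  have hpm := hpc.measurable
  have hp_zero : p 0 = pc 0 := by rw [hp, Finset.sum_range_succ']; simp
  have hp_one : p 1 = qc 0 := by rw [hq, Finset.sum_range_succ']; simp
  have hα : 0 < l * (1 - pc 0) := mul_pos hl (by linarith)
  have hβ : 0 < r * qc 0 := by positivity
  obtain ⟨C, hC, hC1⟩ := exists_normalising (k := k) hl hr hp0 hq0
  set μ := (volume.restrict (Ioo (0 : ℝ) 1)).withDensity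
    fun x => ENNReal.ofReal (polyDens l r C k pc qc x) with hμ
  have hμP : IsProbabilityMeasure μ := by
    constructor
    rw [hμ, withDensity_apply _ .univ, Measure.restrict_univ,
      ← ofReal_integral_eq_lintegral_ofReal (integrableOn_polyDens hα hβ), hC1, ENNReal.ofReal_one]
    exact (ae_restrict_iff' measurableSet_Ioo).2
      (ae_of_all _ fun x hx => (polyDens_pos hl hr hC hx).le)
  have hμS : ∀ᵐ y ∂μ, y ∈ Icc (0 : ℝ) 1 :=
    (withDensity_absolutelyContinuous _ _).ae_le
      ((ae_restrict_iff' measurableSet_Ioo).2 (ae_of_all _ fun x hx => ⟨hx.1.le, hx.2.le⟩))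
  have hinv := bind_mcKernel_polyDens hl hr hC hp hq hp01 hp0 hq0 hpm
  obtain ⟨lam, hfin, hne, hmin⟩ := exists_minorization hl hr hpc hp01 (by rwa [hp_zero])
    (by rwa [hp_one])
  obtain ⟨huniq, hconv⟩ := doeblin (measurable_mcKernel hpm)
    (fun x => isProbabilityMeasure_mcKernel hpm x) measurableSet_Icc
    (fun x hx => mcKernel_mem_Icc hl hr hpm hp01 hx) hne hmin hμS hinv
  refine ⟨μ, hμP, (mem_ae_iff_prob_eq_one measurableSet_Icc).1 hμS, hinv, fun ν hν hν1 hνinv => ?_,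
    hconv, C, hC, hC1, ?_⟩
  · exact huniq ν hν ((mem_ae_iff_prob_eq_one measurableSet_Icc).2 hν1) hνinv
  · rw [hμ, ← withDensity_indicator measurableSet_Ioo]
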